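/- Let 𝒜 = ∑_{α⊆{1,...,N}} ∑_{i,j=1}^S 𝓔_{ij}^α[𝐀_{ij}^α] be an element of the C*-algebra 𝔄 of operators on L²(Ω → ℂ^M) generated by the elementary operators, and let 𝐁_α = ∑_{β⊆α} 𝐀_β with 𝐀_α = (𝐀_{ij}^α)_{i,j=1}^S ∈ ℂ^{MS×MS}. Then the spectrum of 𝒜 as a bounded operator on L² equals the union of the spectra of the matrices 𝐁_α; equivalently, sp(𝒜) = {λ ∈ ℂ : ∏_{α⊆{1,...,N}} det(𝐁_α − λ𝐈) = 0}, where 𝐈 is the MS×MS identity matrix. -/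

import Mathlib

/-!
STATEMENT 12: For 𝒜 = ∑_{α,i,j} 𝓔_{ij}^α[𝐀_{ij}^α] with 𝐁_α = ∑_{β⊆α} 𝐀_β,
the spectrum of 𝒜 equals the union of the spectra of the matrices 𝐁_α;
equivalently sp(𝒜) = {λ ∈ ℂ : ∏_α det(𝐁_α − λ𝐈) = 0}.
-/

open MeasureTheory Finset

noncomputable section

namespace Stmt12

/-- `ℂ^M` with its Euclidean (Hilbert) structure. -/
abbrev V (M : ℕ) := EuclideanSpace ℂ (Fin M)

/-- The half-open cube `H = [0,h)^N`. -/
def cube (N : ℕ) (h : ℝ) : Set (Fin N → ℝ) := Set.univ.pi fun _ => Set.Ico 0 h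

/-- `combine α y x` agrees with `y` in the coordinates `n ∈ α` and with `x`
in the coordinates `n ∉ α`. -/
def combine {N : ℕ} (α : Finset (Fin N)) (y x : Fin N → ℝ) : Fin N → ℝ :=
  fun n => if n ∈ α then y n else x n

/-- The shifted cube `Ω_i = a_i + [0,h)^N`. -/
def OmegaI {N S : ℕ} (a : Fin S → Fin N → ℝ) (h : ℝ) (i : Fin S) :
    Set (Fin N → ℝ) := {x | x - a i ∈ cube N h}

/-- `Ω = ⋃_{i=1}^S Ω_i`. -/
def Omega {N S : ℕ} (a : Fin S → Fin N → ℝ) (h : ℝ) : Set (Fin N → ℝ) :=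
  ⋃ i, OmegaI a h i

/-- The pointwise formula for the elementary operator `𝓔_{ij}^α[𝐀]`:
`(𝓔_{ij}^α[𝐀]u)(x + a_i) = h^{−|α|} 𝐀 ∫_{[0,h)^{|α|}} u(x' + a_j) dx'_α` for
`x ∈ H`, and `0` outside `Ω_i`.  Here the partial integral over the coordinates
in `α` is realized as an integral over the whole cube `[0,h)^N` (the integrand
does not depend on the coordinates of `y` outside `α`), compensated by the
additional normalization `h^{−(N−|α|)}`. -/
def Efun {N M S : ℕ} (a : Fin S → Fin N → ℝ) (h : ℝ) (i j : Fin S)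
    (α : Finset (Fin N)) (A : Matrix (Fin M) (Fin M) ℂ)
    (u : (Fin N → ℝ) → V M) : (Fin N → ℝ) → V M :=
  (OmegaI a h i).indicator fun x =>
    ((h ^ α.card)⁻¹ * (h ^ (N - α.card))⁻¹ : ℝ) •
      (show V M from WithLp.toLp 2 (A.mulVec
        (show Fin M → ℂ from ∫ y in cube N h, u (a j + combine α y (x - a i)))))

/-- The operator `∑_{α ⊆ {1,...,N}} ∑_{i,j=1}^S 𝓔_{ij}^α[coef α i j]`. -/
def bigSum {N M S : ℕ} {a : Fin S → Fin N → ℝ} {h : ℝ}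
    (EE : Fin S → Fin S → Finset (Fin N) → Matrix (Fin M) (Fin M) ℂ →
      (Lp (V M) 2 (volume.restrict (Omega a h)) →L[ℂ]
        Lp (V M) 2 (volume.restrict (Omega a h))))
    (coef : Finset (Fin N) → Fin S → Fin S → Matrix (Fin M) (Fin M) ℂ) :
    Lp (V M) 2 (volume.restrict (Omega a h)) →L[ℂ]
      Lp (V M) 2 (volume.restrict (Omega a h)) :=
  ∑ α : Finset (Fin N), ∑ i : Fin S, ∑ j : Fin S, EE i j α (coef α i j)

/-- The block matrix `(𝐀_{ij})_{i,j=1}^S ∈ ℂ^{MS×MS}` built from an `S×S` array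
of `M×M` matrices. -/
def blockM {M S : ℕ} (c : Fin S → Fin S → Matrix (Fin M) (Fin M) ℂ) :
    Matrix (Fin S × Fin M) (Fin S × Fin M) ℂ :=
  Matrix.of fun p q => c p.1 q.1 p.2 q.2

/-!
Averaging over the coordinates in `α` and then over those in `β` is averaging over those in `α ∪ β`.
Hence, once the restrictions of `u` to the cubes `Ω_i` are stacked into one function on `[0,h)^N`,
the operators `𝒜` represent the Möbius algebra of the lattice of subsets with coefficients in
`ℂ^{MS×MS}`. The zeta transform `(𝐀_α)_α ↦ (𝐁_α)_α` embeds that algebra into a product of matrix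
algebras, and the representation is faithful: if `f` is unimodular with mean zero, then `𝒜` acts on
the functions `∏_{n∉α} f(x_n) • v` as `v ↦ 𝐁_α v`. Injective homomorphisms out of a
finite-dimensional algebra preserve spectra, and the spectrum in a product is the union of the
spectra of the components.
-/

section Algebra

theorem spectrum_apply_eq_of_injective {K A B : Type*} [Field K] [Ring A] [Ring B] [Algebra K A]
    [Algebra K B] [Algebra.IsIntegral K A] {f : A →ₐ[K] B} (hf : Function.Injective f) (a : A) :
    spectrum K (f a) = spectrum K a := by
  refine (AlgHom.spectrum_apply_subset f a).antisymm fun z hz hunit => hz ?_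
  refine IsArtinianRing.isUnit_of_nonZeroDivisor_of_isIntegral' (R := K)
    (comap_nonZeroDivisors_le_of_injective (f := f) hf ?_)
  simpa using hunit.mem_nonZeroDivisors

theorem exists_algHom_of_intertwining {K A E F : Type*} [CommRing K] [Ring A] [Algebra K A]
    [AddCommGroup E] [Module K E] [AddCommGroup F] [Module K F] {J : E →ₗ[K] F}
    (hJ : Function.Injective J) (Ψ : A →ₐ[K] Module.End K F)
    (hΨ : ∀ a, ∃ T : Module.End K E, ∀ v, J (T v) = Ψ a (J v)) :
    ∃ Φ : A →ₐ[K] Module.End K E, ∀ a v, J (Φ a v) = Ψ a (J v) := by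
  choose Φ hΦ using hΨ
  refine ⟨{ toFun := Φ, map_one' := ?_, map_mul' := fun a b => ?_, map_zero' := ?_,
            map_add' := fun a b => ?_, commutes' := fun r => ?_ }, hΦ⟩ <;>
    ext v <;> apply hJ <;> simp [hΦ, Module.algebraMap_end_apply]

theorem matrix_mem_spectrum_iff_det_eq_zero {K n : Type*} [Field K] [Fintype n] [DecidableEq n]
    {A : Matrix n n K} {z : K} :
    z ∈ spectrum K A ↔ (A - z • (1 : Matrix n n K)).det = 0 := by
  rw [spectrum.mem_iff, ← IsUnit.neg_iff, neg_sub, Matrix.isUnit_iff_isUnit_det,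
    isUnit_iff_ne_zero, not_not, Algebra.algebraMap_eq_smul_one]

end Algebra

section MoebiusAlgebra

/-- The monoid structure of a join-semilattice with bottom under `⊔`. The corresponding monoid
algebra `MonoidAlgebra R P` is the Möbius algebra of `P` with coefficients in `R`. -/
abbrev supCommMonoid (P : Type*) [SemilatticeSup P] [OrderBot P] : CommMonoid P where
  mul := (· ⊔ ·)
  one := ⊥
  mul_assoc := sup_assoc
  one_mul := bot_sup_eq
  mul_one := sup_bot_eq
  mul_comm := sup_comm

attribute [local instance] supCommMonoid

variable (K R P : Type*) [Field K] [Ring R] [Algebra K R] [SemilatticeSup P] [OrderBot P]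

open scoped Classical in
/-- The characters `[· ≤ q]` of a join-semilattice, collected over all `q`. -/
def leCharacter : P →* (P → R) where
  toFun p q := if p ≤ q then 1 else 0
  map_one' := funext fun _ => if_pos bot_le
  map_mul' p q := by
    funext r
    rw [Pi.mul_apply, ite_zero_mul_ite_zero, mul_one]
    exact if_congr sup_le_iff rfl rfl

/-- The zeta transform, evaluating an element of the Möbius algebra at all characters. -/
def zetaTransform : MonoidAlgebra R P →ₐ[K] (P → R) :=
  MonoidAlgebra.liftNCAlgHom (Pi.constAlgHom K P R) (leCharacter R P) fun r p => by
    funext q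
    simp [leCharacter]

variable {K R P}

theorem zetaTransform_apply [LocallyFiniteOrderBot P] (a : MonoidAlgebra R P) (p : P) :
    zetaTransform K R P a p = ∑ q ∈ Iic p, a.coeff q := by
  classical
  induction a using MonoidAlgebra.induction_linear with
  | zero => simp
  | add a b ha hb => simp [ha, hb, sum_add_distrib]
  | single q r => simp [zetaTransform, leCharacter, Finsupp.single_apply]

theorem zetaTransform_injective [LocallyFiniteOrder P] :
    Function.Injective (zetaTransform K R P) := by
  classical
  refine (injective_iff_map_eq_zero _).2 fun a ha => ?_
  ext p
  simpa using IncidenceAlgebra.moebius_inversion_bot a.coeff 0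
    (fun q => by rw [← zetaTransform_apply (K := K), ha]) p

theorem spectrum_apply_eq_iUnion [Finite P] [LocallyFiniteOrder P] [FiniteDimensional K R]
    {B : Type*} [Ring B] [Algebra K B] {Φ : MonoidAlgebra R P →ₐ[K] B}
    (hΦ : Function.Injective Φ) (a : MonoidAlgebra R P) :
    spectrum K (Φ a) = ⋃ p, spectrum K (∑ q ∈ Iic p, a.coeff q) := by
  have := FiniteDimensional.of_injective (zetaTransform K R P).toLinearMap zetaTransform_injective
  rw [spectrum_apply_eq_of_injective hΦ, ← spectrum_apply_eq_of_injective zetaTransform_injective,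
    Pi.spectrum_eq]
  simp only [zetaTransform_apply]

end MoebiusAlgebra

section CoordMean

variable {ι : Type*} [DecidableEq ι] {X : ι → Type*}

theorem piecewise_piecewise_eq_piecewise_union (s t : Finset ι) (x y z : ∀ i, X i) :
    t.piecewise z (s.piecewise y x) = (s ∪ t).piecewise (t.piecewise z y) x := by
  ext i
  by_cases ht : i ∈ t <;> by_cases hs : i ∈ s <;> simp [hs, ht]

variable [∀ i, MeasurableSpace (X i)]

theorem measurable_finset_piecewise (s : Finset ι) :
    Measurable fun p : (∀ i, X i) × (∀ i, X i) => s.piecewise p.2 p.1 := by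
  refine measurable_pi_lambda _ fun i => ?_
  by_cases hi : i ∈ s <;> simp only [Finset.piecewise, hi, if_true, if_false] <;> fun_prop

variable {F : Type*} [NormedAddCommGroup F]

/-- The conditional expectation of `w` given the coordinates outside `s`, i.e. the average of `w`
over the coordinates in `s`. Integrating over all coordinates rather than only over those in `s`
makes no difference for probability measures, and keeps the base measure fixed. -/
def coordMean [Fintype ι] [NormedSpace ℝ F] (κ : ∀ i, Measure (X i)) (s : Finset ι)
    (w : (∀ i, X i) → F) (x : ∀ i, X i) : F :=
  ∫ y, w (s.piecewise y x) ∂Measure.pi κ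

variable [Fintype ι] (κ : ∀ i, Measure (X i)) [∀ i, IsProbabilityMeasure (κ i)]

theorem measurePreserving_finset_piecewise (s : Finset ι) :
    MeasurePreserving (fun p : (∀ i, X i) × (∀ i, X i) => s.piecewise p.2 p.1)
      ((Measure.pi κ).prod (Measure.pi κ)) (Measure.pi κ) := by
  have hmeas := measurable_finset_piecewise (X := X) s
  refine ⟨hmeas, (Measure.pi_eq fun t ht => ?_).symm⟩
  have hpre : (fun p : (∀ i, X i) × (∀ i, X i) => s.piecewise p.2 p.1) ⁻¹' Set.univ.pi t =
      (Set.univ.pi (s.piecewise (fun _ => Set.univ) t)) ×ˢ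
        (Set.univ.pi (s.piecewise t fun _ => Set.univ)) := by
    ext p
    simp only [Set.mem_preimage, Set.mem_univ_pi, Set.mem_prod, ← forall_and]
    refine forall_congr' fun i => ?_
    by_cases hi : i ∈ s <;> simp [hi]
  rw [Measure.map_apply hmeas (MeasurableSet.univ_pi ht), hpre, Measure.prod_prod,
    Measure.pi_pi, Measure.pi_pi, ← prod_mul_distrib]
  refine prod_congr rfl fun i _ => ?_
  by_cases hi : i ∈ s <;> simp [hi]

variable {κ} {w w' : (∀ i, X i) → F}

theorem ae_integrable_comp_piecewise (s : Finset ι) (hw : Integrable w (Measure.pi κ)) :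
    ∀ᵐ x ∂Measure.pi κ, Integrable (fun y => w (s.piecewise y x)) (Measure.pi κ) :=
  ((measurePreserving_finset_piecewise κ s).integrable_comp_of_integrable hw).prod_right_ae

variable [NormedSpace ℝ F]

theorem integrable_coordMean (s : Finset ι) (hw : Integrable w (Measure.pi κ)) :
    Integrable (coordMean κ s w) (Measure.pi κ) :=
  ((measurePreserving_finset_piecewise κ s).integrable_comp_of_integrable hw).integral_prod_left

theorem coordMean_congr_ae (s : Finset ι) (h : w =ᵐ[Measure.pi κ] w') :
    coordMean κ s w =ᵐ[Measure.pi κ] coordMean κ s w' := by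
  filter_upwards [Measure.ae_ae_of_ae_prod
    ((measurePreserving_finset_piecewise κ s).quasiMeasurePreserving.ae_eq_comp h)] with x hx
  exact integral_congr_ae hx

theorem coordMean_add (s : Finset ι) (hw : Integrable w (Measure.pi κ))
    (hw' : Integrable w' (Measure.pi κ)) :
    coordMean κ s (w + w') =ᵐ[Measure.pi κ] coordMean κ s w + coordMean κ s w' := by
  filter_upwards [ae_integrable_comp_piecewise s hw, ae_integrable_comp_piecewise s hw']
    with x hx hx'
  exact integral_add hx hx'

theorem coordMean_empty [CompleteSpace F] : coordMean κ ∅ w = w := by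
  funext x
  simp [coordMean]

theorem coordMean_coordMean (s t : Finset ι) (hw : Integrable w (Measure.pi κ)) :
    coordMean κ s (coordMean κ t w) =ᵐ[Measure.pi κ] coordMean κ (s ∪ t) w := by
  filter_upwards [ae_integrable_comp_piecewise (s ∪ t) hw] with x hx
  have hmp := measurePreserving_finset_piecewise κ t
  have hmap := integral_map (μ := (Measure.pi κ).prod (Measure.pi κ))
    hmp.measurable.aemeasurable (f := fun y => w ((s ∪ t).piecewise y x))
    (by rw [hmp.map_eq]; exact hx.aestronglyMeasurable)
  rw [hmp.map_eq] at hmap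
  simp only [coordMean, piecewise_piecewise_eq_piecewise_union]
  exact ((integral_prod _ (hmp.integrable_comp_of_integrable hx)).symm.trans hmap.symm)

variable {𝕜 : Type*} [RCLike 𝕜] [NormedSpace 𝕜 F]

theorem coordMean_clm_comp [CompleteSpace F] (s : Finset ι) (K : F →L[𝕜] F)
    (hw : Integrable w (Measure.pi κ)) :
    coordMean κ s (fun x => K (w x)) =ᵐ[Measure.pi κ] fun x => K (coordMean κ s w x) := by
  filter_upwards [ae_integrable_comp_piecewise s hw] with x hx
  exact K.integral_comp_comm hx

variable (κ 𝕜) in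
/-- `coordMean` as an operator on `L¹`. -/
def coordMeanL1 [SMulCommClass ℝ 𝕜 F] (s : Finset ι) : Module.End 𝕜 (Lp F 1 (Measure.pi κ)) where
  toFun w := (integrable_coordMean s (L1.integrable_coeFn w)).toL1 _
  map_add' w w' := by
    rw [← Integrable.toL1_add, Integrable.toL1_eq_toL1_iff]
    exact (coordMean_congr_ae s (Lp.coeFn_add w w')).trans
      (coordMean_add s (L1.integrable_coeFn w) (L1.integrable_coeFn w'))
  map_smul' c w := by
    rw [RingHom.id_apply, ← Integrable.toL1_smul', Integrable.toL1_eq_toL1_iff]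
    exact (coordMean_congr_ae s (Lp.coeFn_smul c w)).trans
      (ae_of_all _ fun x => integral_smul c _)

variable (𝕜) in
theorem coeFn_coordMeanL1 [SMulCommClass ℝ 𝕜 F] (s : Finset ι) (w : Lp F 1 (Measure.pi κ)) :
    coordMeanL1 κ 𝕜 s w =ᵐ[Measure.pi κ] coordMean κ s w :=
  (integrable_coordMean s (L1.integrable_coeFn w)).coeFn_toL1

attribute [local instance] supCommMonoid

variable (κ 𝕜) in
/-- The averaging operators as a representation of the monoid `(Finset ι, ∪)` on `L¹`. -/
def coordMeanHom [SMulCommClass ℝ 𝕜 F] [CompleteSpace F] :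
    Finset ι →* Module.End 𝕜 (Lp F 1 (Measure.pi κ)) where
  toFun := coordMeanL1 κ 𝕜
  map_one' := by
    ext1 w
    exact Lp.ext ((coeFn_coordMeanL1 𝕜 _ w).trans (.of_eq coordMean_empty))
  map_mul' s t := by
    ext1 w
    exact Lp.ext <| (coeFn_coordMeanL1 𝕜 _ w).trans <|
      (coordMean_coordMean s t (L1.integrable_coeFn w)).symm.trans <|
      (coordMean_congr_ae s (coeFn_coordMeanL1 𝕜 t w)).symm.trans
        (coeFn_coordMeanL1 𝕜 s _).symm

end CoordMean

section Postcomp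

variable {α 𝕜 F : Type*} {m : MeasurableSpace α} [RCLike 𝕜] [NormedAddCommGroup F]
  [NormedSpace 𝕜 F] (p : ENNReal) (μ : Measure α)

/-- Postcomposition with operators on `F`, as an algebra homomorphism into the operators on
`Lp F p μ`. -/
def compLpAlgHom : (F →L[𝕜] F) →ₐ[𝕜] Module.End 𝕜 (Lp F p μ) where
  toFun K := K.compLpₗ p μ
  map_one' := by
    ext1 w
    exact Lp.ext (ContinuousLinearMap.coeFn_compLp' _ w)
  map_mul' K L := by
    ext1 w
    refine Lp.ext ((ContinuousLinearMap.coeFn_compLp' _ w).trans ?_)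
    filter_upwards [L.coeFn_compLp w, K.coeFn_compLp (L.compLp w)] with x hL hK
    exact .trans (congrArg K hL.symm) hK.symm
  map_zero' := by
    ext1 w
    exact Lp.ext ((ContinuousLinearMap.coeFn_compLp' _ w).trans (Lp.coeFn_zero _ _ _).symm)
  map_add' K L := LinearMap.ext (K.add_compLp L)
  commutes' c := by
    ext1 w
    exact Lp.ext ((ContinuousLinearMap.coeFn_compLp' _ w).trans (Lp.coeFn_smul c w).symm)

end Postcomp

section ComplProd

variable {ι : Type*} [DecidableEq ι] [Fintype ι] {X : ι → Type*} {𝕜 : Type*} [RCLike 𝕜]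

/-- The tensor product of the functions `f i` over the coordinates outside `s`. -/
def complProd (f : ∀ i, X i → 𝕜) (s : Finset ι) (x : ∀ i, X i) : 𝕜 :=
  ∏ i ∈ sᶜ, f i (x i)

variable {f : ∀ i, X i → 𝕜}

theorem norm_complProd (hf : ∀ i x, ‖f i x‖ = 1) (s : Finset ι) (x : ∀ i, X i) :
    ‖complProd f s x‖ = 1 := by
  rw [complProd, norm_prod]
  exact prod_eq_one fun i _ => hf i (x i)

variable [∀ i, MeasurableSpace (X i)]

theorem measurable_complProd (hf : ∀ i, Measurable (f i)) (s : Finset ι) :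
    Measurable (complProd f s) :=
  measurable_prod _ fun i _ => (hf i).comp (measurable_pi_apply i)

variable {κ : ∀ i, Measure (X i)} [∀ i, IsProbabilityMeasure (κ i)] {F : Type*}
  [NormedAddCommGroup F] [NormedSpace 𝕜 F]

theorem memLp_complProd_smul (hf_meas : ∀ i, Measurable (f i)) (hf_norm : ∀ i x, ‖f i x‖ = 1)
    (s : Finset ι) (v : F) (p : ENNReal) :
    MemLp (fun x => complProd f s x • v) p (Measure.pi κ) :=
  .of_bound ((measurable_complProd hf_meas s).aestronglyMeasurable.smul_const v) ‖v‖
    (ae_of_all _ fun x => by rw [norm_smul, norm_complProd hf_norm, one_mul])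

variable [NormedSpace ℝ F]

theorem coordMean_complProd (hf : ∀ i, ∫ x, f i x ∂κ i = 0) (s t : Finset ι) :
    coordMean κ t (complProd f s) = if t ⊆ s then complProd f s else 0 := by
  funext x
  have hprod : ∀ y, complProd f s (t.piecewise y x) =
      ∏ i, (fun z => if i ∈ s then 1 else if i ∈ t then f i z else f i (x i)) (y i) := fun y => by
    rw [complProd, ← prod_subset (subset_univ sᶜ) (by simp +contextual)]
    refine prod_congr rfl fun i hi => ?_
    by_cases ht : i ∈ t <;> simp [ht, mem_compl.1 hi]
  simp only [coordMean, hprod, integral_fintype_prod_eq_prod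
    fun i z => if i ∈ s then 1 else if i ∈ t then f i z else f i (x i)]
  split_ifs with hts
  · rw [complProd, ← prod_subset (subset_univ sᶜ) (by simp +contextual)]
    refine prod_congr rfl fun i hi => ?_
    have ht : i ∉ t := fun ht => mem_compl.1 hi (hts ht)
    simp [ht, mem_compl.1 hi]
  · obtain ⟨i, ht, hs⟩ := not_subset.1 hts
    exact prod_eq_zero (mem_univ i) (by simp [hs, ht, hf])

theorem coordMean_complProd_smul [CompleteSpace F] (hf : ∀ i, ∫ x, f i x ∂κ i = 0)
    (s t : Finset ι) (v : F) :
    coordMean κ t (fun x => complProd f s x • v) =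
      if t ≤ s then fun x => complProd f s x • v else 0 := by
  have h := coordMean_complProd hf s t
  funext x
  have hx := congrFun h x
  simp only [coordMean] at hx ⊢
  rw [integral_smul_const, hx]
  by_cases hts : t ⊆ s <;> simp [hts]

end ComplProd

section Representation

attribute [local instance] supCommMonoid

variable {ι : Type*} [DecidableEq ι] [Fintype ι] {X : ι → Type*} [∀ i, MeasurableSpace (X i)]
  {κ : ∀ i, Measure (X i)} [∀ i, IsProbabilityMeasure (κ i)] {𝕜 F : Type*} [RCLike 𝕜]
  [NormedAddCommGroup F] [NormedSpace ℝ F] [NormedSpace 𝕜 F] [SMulCommClass ℝ 𝕜 F]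
  [CompleteSpace F] {f : ∀ i, X i → 𝕜}

theorem commute_compLpAlgHom_coordMeanHom (K : F →L[𝕜] F) (s : Finset ι) :
    Commute (compLpAlgHom 1 (Measure.pi κ) K) (coordMeanHom κ 𝕜 s) := by
  refine LinearMap.ext fun w => Lp.ext ?_
  calc K.compLp (coordMeanL1 κ 𝕜 s w)
      =ᵐ[Measure.pi κ] fun x => K (coordMeanL1 κ 𝕜 s w x) := K.coeFn_compLp' _
    _ =ᵐ[Measure.pi κ] fun x => K (coordMean κ s w x) := (coeFn_coordMeanL1 𝕜 s w).fun_comp K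
    _ =ᵐ[Measure.pi κ] coordMean κ s (fun x => K (w x)) :=
      (coordMean_clm_comp s K (L1.integrable_coeFn w)).symm
    _ =ᵐ[Measure.pi κ] coordMean κ s (K.compLp w) := coordMean_congr_ae s (K.coeFn_compLp' w).symm
    _ =ᵐ[Measure.pi κ] coordMeanL1 κ 𝕜 s (K.compLp w) := (coeFn_coordMeanL1 𝕜 s _).symm

variable (κ 𝕜) in
/-- The representation on `L¹` of the Möbius algebra of `Finset ι` with operator coefficients:
coefficients act on the values and basis elements as averaging operators. -/
def coordMeanAlgHom :
    MonoidAlgebra (F →L[𝕜] F) (Finset ι) →ₐ[𝕜] Module.End 𝕜 (Lp F 1 (Measure.pi κ)) :=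
  MonoidAlgebra.liftNCAlgHom (compLpAlgHom 1 (Measure.pi κ)) (coordMeanHom κ 𝕜)
    commute_compLpAlgHom_coordMeanHom

theorem coeFn_coordMeanAlgHom_single (s : Finset ι) (K : F →L[𝕜] F)
    (w : Lp F 1 (Measure.pi κ)) :
    coordMeanAlgHom κ 𝕜 (MonoidAlgebra.single s K) w =ᵐ[Measure.pi κ]
      fun x => K (coordMean κ s w x) := by
  have hsingle : coordMeanAlgHom κ 𝕜 (MonoidAlgebra.single s K) =
      compLpAlgHom 1 (Measure.pi κ) K * coordMeanHom κ 𝕜 s := MonoidAlgebra.liftNC_single ..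
  rw [hsingle]
  exact (K.coeFn_compLp' _).trans ((coeFn_coordMeanL1 𝕜 s w).fun_comp K)

theorem coeFn_coordMeanAlgHom_of_ae_eq_complProd (hf : ∀ i, ∫ x, f i x ∂κ i = 0)
    (a : MonoidAlgebra (F →L[𝕜] F) (Finset ι)) {s : Finset ι} {v : F} {w : Lp F 1 (Measure.pi κ)}
    (hw : w =ᵐ[Measure.pi κ] fun x => complProd f s x • v) :
    coordMeanAlgHom κ 𝕜 a w =ᵐ[Measure.pi κ]
      fun x => complProd f s x • zetaTransform 𝕜 _ _ a s v := by
  induction a using MonoidAlgebra.induction_linear with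
  | zero =>
    simp only [map_zero, LinearMap.zero_apply, Pi.zero_apply, _root_.zero_apply,
      smul_zero]
    exact Lp.coeFn_zero _ _ _
  | add a b ha hb =>
    rw [map_add, map_add]
    filter_upwards [ha, hb, Lp.coeFn_add (coordMeanAlgHom κ 𝕜 a w) (coordMeanAlgHom κ 𝕜 b w)]
      with x hax hbx hx
    rw [LinearMap.add_apply, hx, Pi.add_apply, hax, hbx, Pi.add_apply, _root_.add_apply, smul_add]
  | single t K =>
    filter_upwards [coeFn_coordMeanAlgHom_single t K w, coordMean_congr_ae t hw] with x hx hx'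
    rw [hx, hx', coordMean_complProd_smul hf, zetaTransform_apply]
    by_cases hts : t ≤ s <;> simp [hts, Finsupp.single_apply]

theorem spectrum_eq_iUnion_of_intertwining [FiniteDimensional 𝕜 F] {E : Type*} [AddCommGroup E]
    [Module 𝕜 E] {J : E →ₗ[𝕜] Lp F 1 (Measure.pi κ)} (hJ : Function.Injective J)
    (hbdd : ∀ w : Lp F 1 (Measure.pi κ), MemLp w ⊤ (Measure.pi κ) → w ∈ LinearMap.range J)
    (hint : ∀ a, ∃ T : Module.End 𝕜 E, ∀ u, J (T u) = coordMeanAlgHom κ 𝕜 a (J u))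
    (hf_meas : ∀ i, Measurable (f i)) (hf_norm : ∀ i x, ‖f i x‖ = 1)
    (hf_zero : ∀ i, ∫ x, f i x ∂κ i = 0) {T : Module.End 𝕜 E}
    {a : MonoidAlgebra (F →L[𝕜] F) (Finset ι)}
    (hT : ∀ u, J (T u) = coordMeanAlgHom κ 𝕜 a (J u)) :
    spectrum 𝕜 T = ⋃ s, spectrum 𝕜 (∑ t ∈ Iic s, a.coeff t) := by
  obtain ⟨Φ, hΦ⟩ := exists_algHom_of_intertwining hJ (coordMeanAlgHom κ 𝕜) hint
  have hΦ_inj : Function.Injective Φ := by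
    refine (injective_iff_map_eq_zero Φ).2 fun b hb => ?_
    refine (injective_iff_map_eq_zero _).1 (zetaTransform_injective (K := 𝕜)) b ?_
    ext s v
    have hmem := memLp_complProd_smul (κ := κ) hf_meas hf_norm s v
    have hw := (hmem 1).coeFn_toLp
    obtain ⟨u, hu⟩ := hbdd (hmem 1).toLp ((memLp_congr_ae hw).2 (hmem ⊤))
    have hzero : coordMeanAlgHom κ 𝕜 b (J u) = 0 := by rw [← hΦ, hb]; simp
    obtain ⟨x, hx, hx'⟩ := ((coeFn_coordMeanAlgHom_of_ae_eq_complProd hf_zero b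
      (hu ▸ hw)).and (hzero ▸ Lp.coeFn_zero F 1 (Measure.pi κ))).exists
    rw [hx', Pi.zero_apply, eq_comm, smul_eq_zero] at hx
    exact hx.resolve_left (norm_ne_zero_iff.1 (by simp [norm_complProd hf_norm]))
  have hTΦ : T = Φ a := LinearMap.ext fun u => hJ ((hT u).trans (hΦ a u).symm)
  rw [hTΦ, spectrum_apply_eq_iUnion hΦ_inj]

end Representation

section Cond

open ProbabilityTheory

variable {α : Type*} {m : MeasurableSpace α} {μ : Measure α} {s : Set α}

theorem measure_smul_cond (h0 : μ s ≠ 0) (htop : μ s ≠ ⊤) : μ s • μ[|s] = μ.restrict s := by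
  rw [ProbabilityTheory.cond, smul_smul, ENNReal.mul_inv_cancel h0 htop, one_smul]

theorem ae_cond_iff (htop : μ s ≠ ⊤) {p : α → Prop} :
    (∀ᵐ x ∂μ[|s], p x) ↔ ∀ᵐ x ∂μ.restrict s, p x :=
  Measure.ae_ennreal_smul_measure_iff (ENNReal.inv_ne_zero.2 htop)

theorem pi_cond {ι : Type*} [Fintype ι] {X : ι → Type*} [∀ i, MeasurableSpace (X i)]
    {μ : ∀ i, Measure (X i)} [∀ i, SigmaFinite (μ i)] {s : ∀ i, Set (X i)}
    (h0 : ∀ i, μ i (s i) ≠ 0) (htop : ∀ i, μ i (s i) ≠ ⊤) :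
    Measure.pi (fun i => (μ i)[|s i]) = (Measure.pi μ)[|Set.univ.pi s] := by
  have := fun i => cond_isProbabilityMeasure_of_finite (h0 i) (htop i)
  refine Measure.pi_eq fun t _ => ?_
  rw [ProbabilityTheory.cond, Measure.restrict_pi_pi]
  simp only [ProbabilityTheory.cond, Measure.smul_apply, Measure.pi_pi, smul_eq_mul,
    prod_mul_distrib]
  rw [ENNReal.prod_inv_distrib fun i _ j _ _ => Or.inl (h0 i)]

theorem measurePreserving_cond_preimage {β : Type*} {mβ : MeasurableSpace β} {ν : Measure β}
    {e : α ≃ᵐ β} (he : MeasurePreserving e μ ν) (t : Set β) :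
    MeasurePreserving e (μ[|e ⁻¹' t]) (ν[|t]) := by
  rw [ProbabilityTheory.cond, ProbabilityTheory.cond, he.measure_preimage_equiv]
  exact (he.restrict_preimage_emb e.measurableEmbedding t).smul_measure _

end Cond

section Cube

open ProbabilityTheory

variable {N S : ℕ} {h : ℝ}

theorem measurableSet_cube : MeasurableSet (cube N h) :=
  MeasurableSet.univ_pi fun _ => measurableSet_Ico

theorem measurableSet_OmegaI (a : Fin S → Fin N → ℝ) (i : Fin S) : MeasurableSet (OmegaI a h i) :=
  (measurable_id.sub_const (a i)) measurableSet_cube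

theorem add_mem_OmegaI {a : Fin S → Fin N → ℝ} {i : Fin S} {x : Fin N → ℝ} :
    a i + x ∈ OmegaI a h i ↔ x ∈ cube N h := by
  simp [OmegaI]

theorem preimage_addLeft_OmegaI (a : Fin S → Fin N → ℝ) (i : Fin S) :
    MeasurableEquiv.addLeft (a i) ⁻¹' OmegaI a h i = cube N h :=
  Set.ext fun _ => add_mem_OmegaI

theorem volume_OmegaI (a : Fin S → Fin N → ℝ) (i : Fin S) :
    volume (OmegaI a h i) = volume (cube N h) := by
  rw [← preimage_addLeft_OmegaI a i]
  exact (measure_preimage_add volume (a i) _).symm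

variable [hh : Fact (0 < h)]

instance isProbabilityMeasure_cond_Ico : IsProbabilityMeasure (volume[|Set.Ico 0 h]) :=
  cond_isProbabilityMeasure_of_finite (by simp [hh.out]) (by simp)

/-- The normalised Lebesgue measure on `[0,h)^N`, as a product measure. -/
abbrev cubeMeasure (N : ℕ) (h : ℝ) : Measure (Fin N → ℝ) :=
  Measure.pi fun _ => volume[|Set.Ico 0 h]

theorem volume_cube : volume (cube N h) = ENNReal.ofReal (h ^ N) := by
  simp [cube, volume_pi, Measure.pi_pi, ENNReal.ofReal_pow hh.out.le]

theorem volume_cube_ne_zero : volume (cube N h) ≠ 0 := by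
  simpa [volume_cube] using pow_pos hh.out N

theorem volume_cube_ne_top : volume (cube N h) ≠ ⊤ := by
  simp [volume_cube]

theorem cubeMeasure_eq_cond : cubeMeasure N h = volume[|cube N h] :=
  pi_cond (by simp [hh.out]) (by simp)

theorem setIntegral_cube {F : Type*} [NormedAddCommGroup F] [NormedSpace ℝ F]
    (f : (Fin N → ℝ) → F) : ∫ y in cube N h, f y = h ^ N • ∫ y, f y ∂cubeMeasure N h := by
  rw [← measure_smul_cond volume_cube_ne_zero volume_cube_ne_top, integral_smul_measure,
    ← cubeMeasure_eq_cond, volume_cube, ENNReal.toReal_ofReal (pow_nonneg hh.out.le N)]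

theorem ae_mem_cube : ∀ᵐ x ∂cubeMeasure N h, x ∈ cube N h := by
  rw [cubeMeasure_eq_cond]
  exact ae_cond_mem measurableSet_cube

theorem measurePreserving_addLeft_cubeMeasure (a : Fin S → Fin N → ℝ) (i : Fin S) :
    MeasurePreserving (MeasurableEquiv.addLeft (a i)) (cubeMeasure N h)
      (volume[|OmegaI a h i]) := by
  rw [cubeMeasure_eq_cond, ← preimage_addLeft_OmegaI a i]
  exact measurePreserving_cond_preimage (measurePreserving_add_left volume (a i)) _

theorem ae_Omega_iff (a : Fin S → Fin N → ℝ) {p : (Fin N → ℝ) → Prop} :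
    (∀ᵐ x ∂volume.restrict (Omega a h), p x) ↔ ∀ i, ∀ᵐ x ∂cubeMeasure N h, p (a i + x) := by
  rw [Omega, ae_restrict_iUnion_iff]
  refine forall_congr' fun i => ?_
  rw [← ae_cond_iff (volume_OmegaI a i ▸ volume_cube_ne_top),
    ← (measurePreserving_addLeft_cubeMeasure a i).map_eq,
    (MeasurableEquiv.measurableEmbedding _).ae_map_iff]
  rfl

end Cube

section Stack

open ProbabilityTheory

variable {N M S : ℕ} {h : ℝ} {a : Fin S → Fin N → ℝ}

/-- The function on the cube collecting the restrictions of `u` to all the cubes `Ω_i`. -/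
def stack (a : Fin S → Fin N → ℝ) (u : (Fin N → ℝ) → V M) (x : Fin N → ℝ) : Fin S × Fin M → ℂ :=
  fun p => u (a p.1 + x) p.2

/-- The function on `Ω` whose restrictions to the cubes `Ω_i` are the components of `g`. -/
def unstack (a : Fin S → Fin N → ℝ) (h : ℝ) (g : (Fin N → ℝ) → Fin S × Fin M → ℂ) :
    (Fin N → ℝ) → V M :=
  fun x => ∑ i, (OmegaI a h i).indicator (fun x => WithLp.toLp 2 fun m => g (x - a i) (i, m)) x

theorem stack_unstack (hdisj : ∀ i j, i ≠ j → Disjoint (OmegaI a h i) (OmegaI a h j))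
    (g : (Fin N → ℝ) → Fin S × Fin M → ℂ) {x : Fin N → ℝ} (hx : x ∈ cube N h) :
    stack a (unstack a h g) x = g x := by
  have hmem : ∀ i, a i + x ∈ OmegaI a h i := fun i => add_mem_OmegaI.2 hx
  funext ⟨i, m⟩
  rw [stack, unstack, sum_eq_single i, Set.indicator_of_mem (hmem i), add_sub_cancel_left]
  · exact fun j _ hj => Set.indicator_of_notMem (Set.disjoint_left.1 (hdisj i j hj.symm) (hmem i)) _
  · simp

variable [hh : Fact (0 < h)]

theorem memLp_unstack {g : (Fin N → ℝ) → Fin S × Fin M → ℂ} {p : ENNReal}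
    (hg : MemLp g p (cubeMeasure N h)) :
    MemLp (unstack a h g) p (volume.restrict (Omega a h)) := by
  refine memLp_finsetSum _ fun i _ => ?_
  rw [memLp_indicator_iff_restrict (measurableSet_OmegaI a i)]
  refine MemLp.mono_measure (ε := V M) (μ := volume.restrict (OmegaI a h i)) ?_ ?_
  · rw [Measure.restrict_restrict (measurableSet_OmegaI a i)]
    exact Measure.restrict_mono Set.inter_subset_left le_rfl
  · let L : (Fin S × Fin M → ℂ) →L[ℂ] V M :=
      (EuclideanSpace.equiv (Fin M) ℂ).symm.toContinuousLinearMap ∘L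
        ContinuousLinearMap.pi fun m => ContinuousLinearMap.proj (i, m)
    have htop : volume (OmegaI a h i) ≠ ⊤ := volume_OmegaI a i ▸ volume_cube_ne_top
    have hL : (fun x => WithLp.toLp 2 fun m => g (x - a i) (i, m)) =
        (fun x => L (g x)) ∘ (MeasurableEquiv.addLeft (a i)).symm :=
      funext fun x => by simp only [sub_eq_neg_add]; rfl
    rw [← measure_smul_cond (volume_OmegaI a i ▸ volume_cube_ne_zero) htop, hL]
    exact ((L.comp_memLp' hg).comp_measurePreserving
      (measurePreserving_addLeft_cubeMeasure a i).symm).smul_measure htop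

theorem stack_congr_ae {u v : (Fin N → ℝ) → V M} (huv : u =ᵐ[volume.restrict (Omega a h)] v) :
    stack a u =ᵐ[cubeMeasure N h] stack a v := by
  filter_upwards [ae_all_iff.2 ((ae_Omega_iff a).1 huv)] with x hx
  funext p
  simp only [stack, hx p.1]

theorem integrable_stack {u : (Fin N → ℝ) → V M} (hu : MemLp u 2 (volume.restrict (Omega a h))) :
    Integrable (stack a u) (cubeMeasure N h) := by
  refine Integrable.of_eval fun p => ?_
  have hp : MemLp u 2 (volume[|OmegaI a h p.1]) :=
    (hu.mono_measure (Measure.restrict_mono (Set.subset_iUnion _ p.1) le_rfl)).smul_measure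
      (ENNReal.inv_ne_top.2 (volume_OmegaI a p.1 ▸ volume_cube_ne_zero))
  exact (EuclideanSpace.proj p.2 : V M →L[ℂ] ℂ).integrable_comp
    ((hp.comp_measurePreserving (measurePreserving_addLeft_cubeMeasure a p.1)).integrable
      one_le_two)

variable (M a h) in
/-- `stack` as a linear map from `L²(Ω)` to `L¹` of the cube. It only serves to intertwine
operators: its target is the largest space on which averaging is defined, and continuity is not
needed. -/
def stackL1 : Lp (V M) 2 (volume.restrict (Omega a h)) →ₗ[ℂ]
    Lp (Fin S × Fin M → ℂ) 1 (cubeMeasure N h) where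
  toFun u := (integrable_stack (Lp.memLp u)).toL1 _
  map_add' u v := by
    rw [← Integrable.toL1_add, Integrable.toL1_eq_toL1_iff]
    exact stack_congr_ae (Lp.coeFn_add u v)
  map_smul' c u := by
    rw [RingHom.id_apply, ← Integrable.toL1_smul', Integrable.toL1_eq_toL1_iff]
    exact stack_congr_ae (Lp.coeFn_smul c u)

theorem coeFn_stackL1 (u : Lp (V M) 2 (volume.restrict (Omega a h))) :
    stackL1 M h a u =ᵐ[cubeMeasure N h] stack a u :=
  (integrable_stack (Lp.memLp u)).coeFn_toL1

theorem stackL1_injective : Function.Injective (stackL1 M h a) := by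
  intro u v huv
  have hae := (Integrable.toL1_eq_toL1_iff _ _ (integrable_stack (Lp.memLp u))
    (integrable_stack (Lp.memLp v))).1 huv
  refine Lp.ext ((ae_Omega_iff a).2 fun i => ?_)
  filter_upwards [hae] with x hx
  ext m
  exact congrFun hx (i, m)

theorem mem_range_stackL1 (hdisj : ∀ i j, i ≠ j → Disjoint (OmegaI a h i) (OmegaI a h j))
    {w : Lp (Fin S × Fin M → ℂ) 1 (cubeMeasure N h)} (hw : MemLp w 2 (cubeMeasure N h)) :
    w ∈ LinearMap.range (stackL1 M h a) := by
  have hu := memLp_unstack (a := a) hw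
  refine ⟨hu.toLp, Lp.ext ((coeFn_stackL1 _).trans ((stack_congr_ae hu.coeFn_toLp).trans ?_))⟩
  filter_upwards [ae_mem_cube] with x hx
  exact stack_unstack hdisj w hx

end Stack

section Symbol

variable {N M S : ℕ}

/-- Square complex matrices as the continuous endomorphisms of `n → ℂ`. -/
def matrixCLM (n : Type*) [Fintype n] [DecidableEq n] :
    Matrix n n ℂ ≃ₐ[ℂ] ((n → ℂ) →L[ℂ] (n → ℂ)) :=
  Matrix.toLinAlgEquiv'.trans (Module.End.toContinuousLinearMap (n → ℂ))

theorem matrixCLM_apply {n : Type*} [Fintype n] [DecidableEq n] (A : Matrix n n ℂ) (v : n → ℂ) :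
    matrixCLM n A v = A.mulVec v :=
  rfl

/-- The element of the Möbius algebra representing `∑_{α,i,j} 𝓔_{ij}^α[c α i j]`: its coefficient
at `α` is the block matrix `(c α i j)_{i,j}`, regarded as an operator. -/
def symbol (c : Finset (Fin N) → Fin S → Fin S → Matrix (Fin M) (Fin M) ℂ) :
    MonoidAlgebra ((Fin S × Fin M → ℂ) →L[ℂ] (Fin S × Fin M → ℂ)) (Finset (Fin N)) :=
  ∑ α, MonoidAlgebra.single α (matrixCLM _ (blockM (c α)))

theorem coeff_symbol (c : Finset (Fin N) → Fin S → Fin S → Matrix (Fin M) (Fin M) ℂ)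
    (α : Finset (Fin N)) : (symbol c).coeff α = matrixCLM _ (blockM (c α)) := by
  simp [symbol, Finsupp.single_apply]

theorem symbol_surjective : Function.Surjective (symbol (N := N) (M := M) (S := S)) := fun b =>
  ⟨fun α i j => ((matrixCLM _).symm (b.coeff α)).submatrix (Prod.mk i) (Prod.mk j), by
    ext1
    ext1 α
    rw [coeff_symbol]
    exact (matrixCLM _).apply_symm_apply (b.coeff α)⟩

theorem blockM_eq_sum (c : Fin S → Fin S → Matrix (Fin M) (Fin M) ℂ) :
    blockM c = ∑ i, ∑ j, Matrix.comp _ _ _ _ _ (Matrix.single i j (c i j)) := by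
  have h := congrArg (Matrix.compAddEquiv _ _ _ _ ℂ) (Matrix.matrix_eq_sum_single (Matrix.of c))
  simp only [map_sum] at h
  exact h

theorem comp_single_mulVec (i j : Fin S) (A : Matrix (Fin M) (Fin M) ℂ) (v : Fin S × Fin M → ℂ)
    (k : Fin S) (m : Fin M) :
    (Matrix.comp _ _ _ _ _ (Matrix.single i j A)).mulVec v (k, m) =
      if k = i then A.mulVec (fun l => v (j, l)) m else 0 := by
  rw [Matrix.mulVec, dotProduct, Fintype.sum_prod_type, sum_eq_single j]
  · by_cases hk : k = i <;>
      simp [Matrix.comp_apply, hk, Ne.symm, Matrix.mulVec, dotProduct]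
  · intro l _ hl
    simp [Matrix.comp_apply, hl.symm]
  · simp

end Symbol

section MeanZero

open ProbabilityTheory

variable {h : ℝ}

theorem integral_exp_cond_Ico [hh : Fact (0 < h)] :
    ∫ t : ℝ, Complex.exp ((2 * Real.pi / h * t : ℝ) * Complex.I) ∂volume[|Set.Ico 0 h] = 0 := by
  have hc : (2 * Real.pi / h : ℂ) * Complex.I ≠ 0 := by
    simp [hh.out.ne', Real.pi_ne_zero]
  have hexp : ∀ t : ℝ, Complex.exp ((2 * Real.pi / h * t : ℝ) * Complex.I) =
      Complex.exp ((2 * Real.pi / h : ℂ) * Complex.I * t) := fun t => by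
    push_cast
    ring_nf
  have hh' : (h : ℂ) ≠ 0 := Complex.ofReal_ne_zero.2 hh.out.ne'
  rw [ProbabilityTheory.cond, integral_smul_measure, integral_Ico_eq_integral_Ioc,
    ← intervalIntegral.integral_of_le hh.out.le]
  simp only [hexp]
  rw [integral_exp_mul_complex hc]
  have : (2 * Real.pi / h : ℂ) * Complex.I * h = 2 * Real.pi * Complex.I := by field_simp
  simp [this]

end MeanZero

section Elementary

open ProbabilityTheory

attribute [local instance] supCommMonoid

variable {N M S : ℕ} {h : ℝ} {a : Fin S → Fin N → ℝ} [hh : Fact (0 < h)]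

theorem Efun_add_of_mem_cube (i j : Fin S) (α : Finset (Fin N)) (A : Matrix (Fin M) (Fin M) ℂ)
    (u : (Fin N → ℝ) → V M) {x : Fin N → ℝ} (hx : x ∈ cube N h) :
    Efun a h i j α A u (a i + x) =
      WithLp.toLp 2 (A.mulVec (∫ y, (u (a j + α.piecewise y x)).ofLp ∂cubeMeasure N h)) := by
  have hN : (h ^ α.card)⁻¹ * (h ^ (N - α.card))⁻¹ * h ^ N = 1 := by
    rw [← mul_inv, ← pow_add, Nat.add_sub_cancel' (by simpa using α.card_le_univ)]
    exact inv_mul_cancel₀ (pow_pos hh.out N).ne'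
  rw [Efun, Set.indicator_of_mem (add_mem_OmegaI.2 hx), add_sub_cancel_left, setIntegral_cube,
    Matrix.mulVec_smul, WithLp.toLp_smul, smul_smul, hN, one_smul]
  rfl

theorem stack_Efun (hdisj : ∀ i j, i ≠ j → Disjoint (OmegaI a h i) (OmegaI a h j))
    (i j : Fin S) (α : Finset (Fin N)) (A : Matrix (Fin M) (Fin M) ℂ)
    {u : (Fin N → ℝ) → V M} {x : Fin N → ℝ} (hx : x ∈ cube N h)
    (hu : Integrable (fun y => stack a u (α.piecewise y x)) (cubeMeasure N h)) :
    stack a (Efun a h i j α A u) x =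
      (Matrix.comp _ _ _ _ _ (Matrix.single i j A)).mulVec
        (coordMean (fun _ => volume[|Set.Ico 0 h]) α (stack a u) x) := by
  funext ⟨k, m⟩
  rw [comp_single_mulVec, stack]
  split_ifs with hk
  · subst hk
    rw [Efun_add_of_mem_cube _ _ _ _ _ hx]
    refine congrFun (congrArg A.mulVec (funext fun l => ?_)) m
    exact (eval_integral (fun l => hu.eval (j, l)) l).trans (eval_integral hu.eval (j, l)).symm
  · have hnot : a k + x ∉ OmegaI a h i :=
      Set.disjoint_left.1 (hdisj k i hk) (add_mem_OmegaI.2 hx)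
    simp [Efun, hnot]

variable {EE : Fin S → Fin S → Finset (Fin N) → Matrix (Fin M) (Fin M) ℂ →
  (Lp (V M) 2 (volume.restrict (Omega a h)) →L[ℂ] Lp (V M) 2 (volume.restrict (Omega a h)))}

theorem stackL1_elementary (hdisj : ∀ i j, i ≠ j → Disjoint (OmegaI a h i) (OmegaI a h j))
    {i j : Fin S} {α : Finset (Fin N)} {A : Matrix (Fin M) (Fin M) ℂ}
    {u v : Lp (V M) 2 (volume.restrict (Omega a h))}
    (hv : v =ᵐ[volume.restrict (Omega a h)] Efun a h i j α A u) :
    stackL1 M h a v = coordMeanAlgHom (fun _ => volume[|Set.Ico 0 h]) ℂ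
      (MonoidAlgebra.single α (matrixCLM _ (Matrix.comp _ _ _ _ _ (Matrix.single i j A))))
      (stackL1 M h a u) := by
  refine Lp.ext ((coeFn_stackL1 v).trans ((stack_congr_ae hv).trans ?_))
  filter_upwards [ae_mem_cube, ae_integrable_comp_piecewise α (integrable_stack (Lp.memLp u)),
    coordMean_congr_ae α (coeFn_stackL1 u),
    coeFn_coordMeanAlgHom_single α (matrixCLM (Fin S × Fin M)
      (Matrix.comp _ _ _ _ _ (Matrix.single i j A))) (stackL1 M h a u)] with x hx hint hmean hsingle
  rw [stack_Efun hdisj i j α A hx hint, hsingle, matrixCLM_apply, hmean]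

theorem stackL1_bigSum (hdisj : ∀ i j, i ≠ j → Disjoint (OmegaI a h i) (OmegaI a h j))
    (hEE : ∀ i j α A u, EE i j α A u =ᵐ[volume.restrict (Omega a h)] Efun a h i j α A u)
    (c : Finset (Fin N) → Fin S → Fin S → Matrix (Fin M) (Fin M) ℂ)
    (u : Lp (V M) 2 (volume.restrict (Omega a h))) :
    stackL1 M h a (bigSum EE c u) =
      coordMeanAlgHom (fun _ => volume[|Set.Ico 0 h]) ℂ (symbol c) (stackL1 M h a u) := by
  simp only [bigSum, symbol, blockM_eq_sum, map_sum, ← MonoidAlgebra.singleAddHom_apply,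
    _root_.sum_apply, LinearMap.sum_apply]
  exact sum_congr rfl fun α _ => sum_congr rfl fun i _ => sum_congr rfl fun j _ =>
    stackL1_elementary hdisj (hEE i j α _ u)

theorem spectrum_bigSum (hdisj : ∀ i j, i ≠ j → Disjoint (OmegaI a h i) (OmegaI a h j))
    (hEE : ∀ i j α A u, EE i j α A u =ᵐ[volume.restrict (Omega a h)] Efun a h i j α A u)
    (c : Finset (Fin N) → Fin S → Fin S → Matrix (Fin M) (Fin M) ℂ) :
    spectrum ℂ (bigSum EE c) = ⋃ α : Finset (Fin N), spectrum ℂ (∑ β ∈ Iic α, blockM (c β)) := by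
  have hrange (w : Lp (Fin S × Fin M → ℂ) 1 (cubeMeasure N h))
      (hw : MemLp w ⊤ (cubeMeasure N h)) : w ∈ LinearMap.range (stackL1 M h a) :=
    mem_range_stackL1 hdisj (hw.mono_exponent le_top)
  have hint (b : MonoidAlgebra ((Fin S × Fin M → ℂ) →L[ℂ] (Fin S × Fin M → ℂ)) (Finset (Fin N))) :
      ∃ T : Module.End ℂ (Lp (V M) 2 (volume.restrict (Omega a h))), ∀ u, stackL1 M h a (T u) =
        coordMeanAlgHom (fun _ => volume[|Set.Ico 0 h]) ℂ b (stackL1 M h a u) := by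
    obtain ⟨c, rfl⟩ := symbol_surjective b
    exact ⟨(bigSum EE c).toLinearMap, stackL1_bigSum hdisj hEE c⟩
  rw [ContinuousLinearMap.spectrum_eq, spectrum_eq_iUnion_of_intertwining stackL1_injective
    hrange hint (fun _ => by fun_prop) (fun _ _ => Complex.norm_exp_ofReal_mul_I _)
    (fun _ => integral_exp_cond_Ico) (stackL1_bigSum hdisj hEE c)]
  simp only [coeff_symbol, ← map_sum, AlgEquiv.spectrum_eq]

end Elementary

/-- The spectrum of `𝒜 = ∑_{α,i,j} 𝓔_{ij}^α[𝐀_{ij}^α]` as a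
bounded operator on `L²` equals the union of the spectra of the matrices
`𝐁_α = ∑_{β⊆α} 𝐀_β`, i.e. `{λ : ∏_α det(𝐁_α − λ𝐈) = 0}`. -/
theorem spectrum_eq_union_matrix_spectra (N M S : ℕ) (hN : 1 ≤ N)
    (hM : 1 ≤ M) (hS : 1 ≤ S) (h : ℝ) (hh : 0 < h) (a : Fin S → Fin N → ℝ)
    (hdisj : ∀ i j : Fin S, i ≠ j → Disjoint (OmegaI a h i) (OmegaI a h j))
    (EE : Fin S → Fin S → Finset (Fin N) → Matrix (Fin M) (Fin M) ℂ →
      (Lp (V M) 2 (volume.restrict (Omega a h)) →L[ℂ]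
        Lp (V M) 2 (volume.restrict (Omega a h))))
    (hEE : ∀ i j α A (u : Lp (V M) 2 (volume.restrict (Omega a h))),
      (EE i j α A u : (Fin N → ℝ) → V M) =ᵐ[volume.restrict (Omega a h)]
        Efun a h i j α A u)
    (coef : Finset (Fin N) → Fin S → Fin S → Matrix (Fin M) (Fin M) ℂ) :
    (spectrum ℂ (bigSum EE coef) =
      ⋃ α : Finset (Fin N), spectrum ℂ (∑ β ∈ α.powerset, blockM (coef β))) ∧
    (spectrum ℂ (bigSum EE coef) =
      {z : ℂ | ∏ α : Finset (Fin N),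
        ((∑ β ∈ α.powerset, blockM (coef β)) - z •
          (1 : Matrix (Fin S × Fin M) (Fin S × Fin M) ℂ)).det = 0}) := by
  have : Fact (0 < h) := ⟨hh⟩
  have hspec : spectrum ℂ (bigSum EE coef) =
      ⋃ α : Finset (Fin N), spectrum ℂ (∑ β ∈ α.powerset, blockM (coef β)) := by
    simpa only [Iic_eq_powerset] using spectrum_bigSum hdisj hEE coef
  refine ⟨hspec, hspec.trans (Set.ext fun z => ?_)⟩
  simp only [Set.mem_iUnion, Set.mem_ofPred_eq, prod_eq_zero_iff, mem_univ, true_and,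
    matrix_mem_spectrum_iff_det_eq_zero]

end Stmt12
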